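/- Let D be a d×d doubly stochastic matrix. Then there exist a positive integer m, nonnegative real numbers α_1, …, α_m with α_1 + ⋯ + α_m = 1, and an (m·d)×(m·d) unitary complex matrix U such that for every vector β ∈ ℂᵈ, the diagonal compression of U·(diag(α) ⊗ diag(β))·Uᴴ equals (1/m)·(I_m ⊗ diag(Dβ)), where Dβ denotes the product of D (viewed as a complex matrix) with β. -/

import Mathlib

/-!
By Birkhoff's theorem `D = ∑ₖ αₖ Pₖ` is a convex combination of `m = d!` permutation matrices.
Let `F` be the `m × m` unitary Fourier matrix, all of whose entries have squared modulus `1 / m`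
(`exists_flat_unitary`), and put `U = (F ⊗ I) · (⊕ₖ Pₖ)`, with entries
`U (j, a) (k, b) = F j k * Pₖ a b`. This is a product of unitaries, and the `(j, a)` diagonal entry
of `U (diag α ⊗ diag β) Uᴴ` is `∑ₖ |F j k|² αₖ (Pₖ β)ₐ = (1 / m) (D β)ₐ`.
-/

open Matrix
open scoped Kronecker

/-- The diagonal compression of a square complex matrix: it keeps the diagonal
entries and sets all off-diagonal entries to zero. -/
def diagCompress {n : Type*} [DecidableEq n] (M : Matrix n n ℂ) : Matrix n n ℂ :=
  Matrix.diagonal (Matrix.diag M)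

/-- For the unitary `m × m` Fourier matrix, column orthonormality is the vanishing of a geometric
sum over a nontrivial `m`-th root of unity. -/
lemma exists_flat_unitary (m : ℕ) (hm : 0 < m) :
    ∃ F : Matrix (Fin m) (Fin m) ℂ, Fᴴ * F = 1 ∧
      ∀ j k, F j k * star (F j k) = (1 : ℂ) / m := by
  have hm0 : (m : ℂ) ≠ 0 := by exact_mod_cast hm.ne'
  obtain ⟨ζ, hζ⟩ : ∃ ζ : ℂ, IsPrimitiveRoot ζ m := ⟨_, Complex.isPrimitiveRoot_exp m hm.ne'⟩
  have hζ0 : ζ ≠ 0 := hζ.ne_zero hm.ne'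
  have hconj : star ζ = ζ⁻¹ := by
    rw [Complex.inv_eq_conj (hζ.norm'_eq_one hm.ne')]
    rfl
  obtain ⟨c, hc, hcstar⟩ : ∃ c : ℂ, c * c = 1 / m ∧ star c = c := by
    refine ⟨((Real.sqrt (1 / m) : ℝ) : ℂ), ?_, Complex.conj_ofReal _⟩
    rw [← Complex.ofReal_mul, Real.mul_self_sqrt (by positivity)]
    push_cast
    rfl
  refine ⟨Matrix.of fun j k => c * (ζ ^ (k : ℕ)) ^ (j : ℕ), ?_, ?_⟩
  · ext k l
    have hterm : ∀ j : Fin m, star (c * (ζ ^ (k : ℕ)) ^ (j : ℕ)) * (c * (ζ ^ (l : ℕ)) ^ (j : ℕ))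
        = 1 / m * ((ζ ^ (k : ℕ))⁻¹ * ζ ^ (l : ℕ)) ^ (j : ℕ) := by
      intro j
      rw [star_mul', star_pow, star_pow, hconj, hcstar, ← hc, mul_pow, inv_pow]
      ring
    simp only [mul_apply, conjTranspose_apply, of_apply, hterm]
    rw [← Finset.mul_sum,
      Fin.sum_univ_eq_sum_range (fun j => ((ζ ^ (k : ℕ))⁻¹ * ζ ^ (l : ℕ)) ^ j) m]
    by_cases hkl : k = l
    · subst hkl
      simp [hζ0, hm0]
    · have hx : (ζ ^ (k : ℕ))⁻¹ * ζ ^ (l : ℕ) ≠ 1 := by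
        intro h
        rw [inv_mul_eq_one₀ (pow_ne_zero _ hζ0)] at h
        exact hkl (Fin.ext (hζ.pow_inj k.2 l.2 h))
      have hxm : ((ζ ^ (k : ℕ))⁻¹ * ζ ^ (l : ℕ)) ^ m = 1 := by
        rw [mul_pow, inv_pow, ← pow_mul, ← pow_mul, mul_comm, mul_comm _ m, mul_comm _ m,
          pow_mul, pow_mul, hζ.pow_eq_one]
        simp
      rw [geom_sum_eq hx, hxm, one_apply_ne hkl]
      simp
  · intro j k
    simp only [of_apply]
    rw [star_mul', star_pow, star_pow, hconj, hcstar, mul_mul_mul_comm, hc, ← mul_pow,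
      ← mul_pow, mul_inv_cancel₀ hζ0]
    simp

/-- For any `d × d` doubly stochastic matrix `D` there are `m ∈ ℕ`, a probability
vector `α ∈ ℝᵐ` and a unitary `U ∈ M_{m·d}(ℂ)` such that for all `β ∈ ℂᵈ`,
`E_{m·d}(U (diag(α) ⊗ diag(β)) Uᴴ) = (1/m) I_m ⊗ diag(Dβ)`. -/
theorem exists_unitary_dilation_of_doublyStochastic
    (d : ℕ) (D : Matrix (Fin d) (Fin d) ℝ)
    (hpos : ∀ i j, 0 ≤ D i j)
    (hrow : ∀ i, ∑ j, D i j = 1)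
    (hcol : ∀ j, ∑ i, D i j = 1) :
    ∃ (m : ℕ), 0 < m ∧ ∃ (α : Fin m → ℝ), (∀ j, 0 ≤ α j) ∧ (∑ j, α j = 1) ∧
      ∃ U : Matrix (Fin m × Fin d) (Fin m × Fin d) ℂ, Uᴴ * U = 1 ∧
        ∀ β : Fin d → ℂ,
          diagCompress (U * ((Matrix.diagonal fun j => (α j : ℂ)) ⊗ₖ Matrix.diagonal β) * Uᴴ)
            = ((1 : ℂ) / m) •
                ((1 : Matrix (Fin m) (Fin m) ℂ) ⊗ₖ
                  Matrix.diagonal ((D.map fun x => (x : ℂ)) *ᵥ β)) := by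
  have hD : D ∈ doublyStochastic ℝ (Fin d) :=
    mem_doublyStochastic_iff_sum.2 ⟨hpos, hrow, hcol⟩
  obtain ⟨w, hw0, hw1, hwD⟩ := exists_eq_sum_perm_of_mem_doublyStochastic hD
  obtain ⟨m, hm, ⟨e⟩⟩ : ∃ m : ℕ, 0 < m ∧ Nonempty (Fin m ≃ Equiv.Perm (Fin d)) :=
    ⟨_, Fintype.card_pos, ⟨(Fintype.equivFin _).symm⟩⟩
  obtain ⟨F, hF, hFabs⟩ := exists_flat_unitary m hm
  refine ⟨m, hm, fun k => w (e k), fun k => hw0 _, (e.sum_comp w).trans hw1,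
    Matrix.of fun p q => F p.1 q.1 * if e q.1 p.2 = q.2 then 1 else 0, ?_, ?_⟩
  · ext ⟨k, b⟩ ⟨l, c⟩
    have hFkl : ∑ j, star (F j k) * F j l = (1 : Matrix (Fin m) (Fin m) ℂ) k l := by
      rw [← hF, mul_apply]
      rfl
    have hterm : ∀ (j : Fin m) (a : Fin d),
        star (F j k * if e k a = b then (1 : ℂ) else 0) * (F j l * if e l a = c then 1 else 0)
          = (star (F j k) * F j l) *
            ((if e k a = b then 1 else 0) * if e l a = c then 1 else 0) := by
      intro j a
      split_ifs <;> simp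
    simp only [mul_apply, conjTranspose_apply, of_apply, Fintype.sum_prod_type, hterm]
    refine (Fintype.sum_mul_sum (fun j => star (F j k) * F j l) fun a =>
      (if e k a = b then (1 : ℂ) else 0) * if e l a = c then 1 else 0).symm.trans ?_
    rw [hFkl]
    by_cases hkl : k = l
    · subst hkl
      rw [← (e k).symm.sum_comp]
      simp [one_apply, eq_comm]
    · rw [one_apply_ne hkl, one_apply_ne (by simp [hkl]), zero_mul]
  · intro β
    have hDab : ∀ a b, (D a b : ℂ) = ∑ k, (w (e k) : ℂ) * if e k a = b then 1 else 0 := by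
      intro a b
      rw [← hwD, e.sum_comp (fun σ => (w σ : ℂ) * if σ a = b then 1 else 0), Matrix.sum_apply]
      push_cast
      refine Finset.sum_congr rfl fun σ _ => ?_
      simp [Equiv.Perm.permMatrix, PEquiv.toMatrix_apply, eq_comm, apply_ite Complex.ofReal]
    rw [← diagonal_one, diagonal_kronecker_diagonal, diagonal_kronecker_diagonal, ← diagonal_smul]
    unfold diagCompress
    congr 1
    ext ⟨j, a⟩
    have hterm : ∀ (k : Fin m) (b : Fin d),
        (F j k * if e k a = b then (1 : ℂ) else 0) * (w (e k) * β b) *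
            star (F j k * if e k a = b then (1 : ℂ) else 0)
          = 1 / m * ((w (e k) * if e k a = b then 1 else 0) * β b) := by
      intro k b
      rw [← hFabs j k]
      split_ifs <;> simp
      ring
    rw [diag_apply, Matrix.mul_apply]
    simp only [mul_diagonal, conjTranspose_apply, of_apply,
      Fintype.sum_prod_type, hterm, Pi.smul_apply, smul_eq_mul, one_mul, mulVec, dotProduct,
      map_apply, hDab, Finset.sum_mul, Finset.mul_sum]
    exact Finset.sum_comm
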